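/- arXiv:2310.06258 — 5 statements merged into one kernel-verified Lean document; each statement's English description precedes it below -/
import Mathlib

section
/- Let M : X → PMF(O) be an ε-differentially private mechanism on a finite product input space with finite output space O, let C be a finite consequence space, u : C → ℝ a nonnegative utility function, f : O → C a post-processor, and x, x' ∈ X neighboring inputs. If both expected utilities E := Σ_{c∈C} u(c)·P(f(M(x)) = c) and E' := Σ_{c∈C} u(c)·P(f(M(x')) = c) are nonzero, then e^{-ε} ≤ E / E' ≤ e^ε. -/
open scoped ENNReal

/-- Two inputs of a product space are neighboring if they differ in exactly one coordinate. -/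
def Neighboring {n : ℕ} {X : Fin n → Type*} (x x' : ∀ j, X j) : Prop :=
  ∃ j : Fin n, x j ≠ x' j ∧ ∀ i : Fin n, i ≠ j → x i = x' i

/-- `M` satisfies `(ε,δ)`-differential privacy. -/
def IsDP {n : ℕ} {X : Fin n → Type*} {O : Type*}
    (M : (∀ j, X j) → PMF O) (ε δ : ℝ) : Prop :=
  ∀ x x' : ∀ j, X j, Neighboring x x' → ∀ S : Set O,
    (M x).toOuterMeasure S ≤
      ENNReal.ofReal (Real.exp ε) * (M x').toOuterMeasure S + ENNReal.ofReal δ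

theorem map_le_aux {n : ℕ} {X : Fin n → Type*} {O : Type*}
    (M : (∀ j, X j) → PMF O) (ε : ℝ) (hM : IsDP M ε 0)
    (C : Type*) [Fintype C] (u : C → ℝ) (hu : ∀ c, 0 ≤ u c) (f : O → C)
    (x x' : ∀ j, X j) (hxx' : Neighboring x x') :
    ∑ c : C, u c * (((M x).map f) c).toReal ≤
      Real.exp ε * ∑ c : C, u c * (((M x').map f) c).toReal := by
  rw [Finset.mul_sum]
  refine Finset.sum_le_sum fun c _ => ?_
  have h := hM x x' hxx' (f ⁻¹' {c})
  rw [← PMF.toOuterMeasure_map_apply, ← PMF.toOuterMeasure_map_apply,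
    PMF.toOuterMeasure_apply_singleton, PMF.toOuterMeasure_apply_singleton,
    ENNReal.ofReal_zero, add_zero] at h
  have h2 := ENNReal.toReal_mono
    (ENNReal.mul_ne_top ENNReal.ofReal_ne_top (PMF.apply_ne_top _ _)) h
  rw [ENNReal.toReal_mul, ENNReal.toReal_ofReal (Real.exp_pos ε).le] at h2
  calc _ ≤ u c * (Real.exp ε * (((M x').map f) c).toReal) :=
        mul_le_mul_of_nonneg_left h2 (hu c)
    _ = _ := by ring

/-- for an `ε`-DP mechanism, a nonnegative utility function and neighboring
inputs, if both expected utilities are nonzero then their ratio lies in `[e^{-ε}, e^ε]`. -/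
theorem stmt2 {n : ℕ} {X : Fin n → Type*} [∀ j, Fintype (X j)] {O : Type*} [Fintype O]
    (M : (∀ j, X j) → PMF O) (ε : ℝ) (hε : 0 ≤ ε) (hM : IsDP M ε 0)
    (C : Type*) [Fintype C] (u : C → ℝ) (hu : ∀ c, 0 ≤ u c) (f : O → C)
    (x x' : ∀ j, X j) (hxx' : Neighboring x x')
    (E E' : ℝ)
    (hE : E = ∑ c : C, u c * (((M x).map f) c).toReal)
    (hE' : E' = ∑ c : C, u c * (((M x').map f) c).toReal)
    (hEne : E ≠ 0) (hE'ne : E' ≠ 0) :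
    Real.exp (-ε) ≤ E / E' ∧ E / E' ≤ Real.exp ε := by
  have hsymm : Neighboring x' x := by
    obtain ⟨j, h1, h2⟩ := hxx'
    exact ⟨j, h1.symm, fun i hi => (h2 i hi).symm⟩
  have h1 := map_le_aux M ε hM C u hu f x x' hxx'
  have h2 := map_le_aux M ε hM C u hu f x' x hsymm
  have h0 : 0 ≤ E' := by
    rw [hE']
    exact Finset.sum_nonneg fun c _ => mul_nonneg (hu c) ENNReal.toReal_nonneg
  rw [← hE, ← hE'] at h1 h2
  have hpos : 0 < E' := lt_of_le_of_ne h0 (Ne.symm hE'ne)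
  refine ⟨?_, (div_le_iff₀ hpos).2 h1⟩
  rw [le_div_iff₀ hpos, Real.exp_neg, inv_mul_le_iff₀ (Real.exp_pos ε)]
  exact h2
end

section
/- (Euclidean-Scale Utility Bound.) Let M : X → PMF(O) be a mechanism on a finite product input space satisfying (ε,δ)-differential privacy, let C be a finite consequence space, u : C → ℝ any utility function, and f : O → C any post-processing function. Then for every agent j, every environment x₋ⱼ, and every pair of responses x_j, x'_j ∈ X_j: |Σ_{c∈C} u(c)·P(f(M(x_j,x₋ⱼ)) = c) − Σ_{c∈C} u(c)·P(f(M(x'_j,x₋ⱼ)) = c)| ≤ (e^ε − 1 + δ·|C|)·(max_{c∈C} u(c) − min_{c∈C} u(c)). -/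
open scoped ENNReal

lemma stmt3_aux {C : Type*} [Fintype C] [Nonempty C] (p q : C → ℝ) (e δ : ℝ) (he : 1 ≤ e)
    (hδ : 0 ≤ δ) (hp : ∑ c, p c = 1) (hq : ∑ c, q c = 1) (hq0 : ∀ c, 0 ≤ q c)
    (h : ∀ c, p c ≤ e * q c + δ) (u : C → ℝ) :
    ∑ c, u c * p c - ∑ c, u c * q c ≤ (e - 1 + δ * (Fintype.card C : ℝ)) *
        (Finset.univ.sup' Finset.univ_nonempty u - Finset.univ.inf' Finset.univ_nonempty u) := by
  set A := Finset.univ.sup' Finset.univ_nonempty u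
  set B := Finset.univ.inf' Finset.univ_nonempty u
  have hA : ∀ c, u c ≤ A := fun c => Finset.le_sup' u (Finset.mem_univ c)
  have hB : ∀ c, B ≤ u c := fun c => Finset.inf'_le u (Finset.mem_univ c)
  have h1 : ∑ c, u c * p c - ∑ c, u c * q c = ∑ c, (u c - B) * (p c - q c) := by
    have : ∑ c, (u c - B) * (p c - q c)
        = ∑ c, u c * p c - ∑ c, u c * q c - B * (∑ c, p c - ∑ c, q c) := by
      rw [mul_sub, Finset.mul_sum, Finset.mul_sum, ← Finset.sum_sub_distrib,
        ← Finset.sum_sub_distrib, ← Finset.sum_sub_distrib]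
      exact Finset.sum_congr rfl fun c _ => by ring
    rw [this, hp, hq]; ring
  have h2 : (e - 1 + δ * (Fintype.card C : ℝ)) * (A - B)
      = ∑ c, (A - B) * ((e - 1) * q c + δ) := by
    rw [← Finset.mul_sum, Finset.sum_add_distrib, ← Finset.mul_sum, hq]
    simp
    ring
  rw [h1, h2]
  refine Finset.sum_le_sum fun c _ => ?_
  have h3 : p c - q c ≤ (e - 1) * q c + δ := by linarith [h c]
  have h4 : 0 ≤ (e - 1) * q c + δ := add_nonneg (mul_nonneg (by linarith) (hq0 c)) hδ
  exact (mul_le_mul_of_nonneg_left h3 (by linarith [hB c])).trans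
    (mul_le_mul_of_nonneg_right (by linarith [hA c]) h4)

lemma stmt3_sum {C : Type*} [Fintype C] (p : PMF C) : ∑ c, (p c).toReal = 1 := by
  rw [← ENNReal.toReal_sum (fun c _ => p.apply_ne_top c), ← tsum_fintype (L := .unconditional C),
    p.tsum_coe]
  simp

lemma stmt3_dp {n : ℕ} {X : Fin n → Type*} {O C : Type*}
    (M : (∀ j, X j) → PMF O) (ε δ : ℝ) (hδ0 : 0 ≤ δ) (hM : IsDP M ε δ) (f : O → C)
    (j : Fin n) (x : ∀ i, X i) (a b : X j) (hab : a ≠ b) (c : C) :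
    (((M (Function.update x j a)).map f) c).toReal ≤
      Real.exp ε * (((M (Function.update x j b)).map f) c).toReal + δ := by
  have key : ∀ p : PMF O, (p.map f) c = p.toOuterMeasure (f ⁻¹' {c}) := fun p => by
    rw [← PMF.toOuterMeasure_map_apply, PMF.toOuterMeasure_apply_singleton]
  have h := hM (Function.update x j a) (Function.update x j b)
    ⟨j, by simpa using hab, fun i hi => by simp [hi]⟩ (f ⁻¹' {c})
  rw [← key, ← key] at h
  have h' := ENNReal.toReal_mono (ENNReal.add_ne_top.2
    ⟨ENNReal.mul_ne_top ENNReal.ofReal_ne_top (PMF.apply_ne_top _ _), ENNReal.ofReal_ne_top⟩) h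
  rwa [ENNReal.toReal_add (ENNReal.mul_ne_top ENNReal.ofReal_ne_top (PMF.apply_ne_top _ _))
    ENNReal.ofReal_ne_top, ENNReal.toReal_mul, ENNReal.toReal_ofReal (Real.exp_pos ε).le,
    ENNReal.toReal_ofReal hδ0] at h'

/-- Euclidean-Scale Utility Bound: for an `(ε,δ)`-DP mechanism, any
real-valued utility function, any post-processor, any agent `j`, any environment and any
pair of responses, the difference of expected utilities is bounded by
`(e^ε - 1 + δ|C|) (max u - min u)`. -/
theorem stmt3 {n : ℕ} {X : Fin n → Type*} [∀ j, Fintype (X j)] {O : Type*}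
    {C : Type*} [Fintype C] [Nonempty C]
    (M : (∀ j, X j) → PMF O) (ε δ : ℝ) (hε : 0 ≤ ε) (hδ0 : 0 ≤ δ) (hδ1 : δ ≤ 1)
    (hM : IsDP M ε δ) (u : C → ℝ) (f : O → C)
    (j : Fin n) (x : ∀ i, X i) (a b : X j) :
    |∑ c : C, u c * (((M (Function.update x j a)).map f) c).toReal -
        ∑ c : C, u c * (((M (Function.update x j b)).map f) c).toReal| ≤
      (Real.exp ε - 1 + δ * (Fintype.card C : ℝ)) *
        (Finset.univ.sup' Finset.univ_nonempty u - Finset.univ.inf' Finset.univ_nonempty u) := by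
  have he : 1 ≤ Real.exp ε := Real.one_le_exp hε
  by_cases hab : a = b
  · subst hab
    rw [sub_self, abs_zero]
    refine mul_nonneg (add_nonneg (by linarith) (by positivity)) ?_
    obtain ⟨c⟩ := ‹Nonempty C›
    exact sub_nonneg.2 ((Finset.inf'_le u (Finset.mem_univ c)).trans
      (Finset.le_sup' u (Finset.mem_univ c)))
  · rw [abs_sub_le_iff]
    exact ⟨stmt3_aux _ _ _ _ he hδ0 (stmt3_sum _) (stmt3_sum _) (fun _ => ENNReal.toReal_nonneg)
        (stmt3_dp M ε δ hδ0 hM f j x a b hab) u,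
      stmt3_aux _ _ _ _ he hδ0 (stmt3_sum _) (stmt3_sum _) (fun _ => ENNReal.toReal_nonneg)
        (stmt3_dp M ε δ hδ0 hM f j x b a (Ne.symm hab)) u⟩
end

section
/- (Laplace Mechanism.) Let X be a finite product space with the neighboring relation, let q : X → ℝ be a function with global sensitivity GS(q) = sup over neighboring x, x' of |q(x) − q(x')| satisfying 0 < GS(q) < ∞, and let ε > 0. For each x ∈ X let ν_x be the measure on ℝ with density z ↦ (ε/(2·GS(q)))·exp(−ε·|z − q(x)|/GS(q)) with respect to Lebesgue measure (the law of q(x) + L where L has the Laplace distribution with scale GS(q)/ε). Then for all neighboring x, x' ∈ X and all measurable sets S ⊆ ℝ, ν_x(S) ≤ e^ε · ν_{x'}(S); i.e., the Laplace mechanism satisfies ε-differential privacy. -/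
open scoped ENNReal
open MeasureTheory

/-- Laplace Mechanism: let `q : X → ℝ` have global sensitivity
`GS = sup over neighboring x,x' of |q x - q x'|` with `0 < GS` (finite since `X` is a
finite space), and `ε > 0`. Let `ν x` be the law of `q x + L`, `L ∼ Lap(GS/ε)`, i.e. the
measure with density `z ↦ (ε/(2 GS)) exp(-ε |z - q x| / GS)` w.r.t. Lebesgue measure.
Then for all neighboring `x, x'` and all measurable `S ⊆ ℝ`, `ν x S ≤ e^ε · ν x' S`. -/
theorem stmt8 {n : ℕ} {X : Fin n → Type*} [∀ j, Fintype (X j)]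
    (q : (∀ j, X j) → ℝ) (ε : ℝ) (hε : 0 < ε)
    (GS : ℝ)
    (hGS : GS = sSup {d : ℝ | ∃ x x' : ∀ j, X j, Neighboring x x' ∧ d = |q x - q x'|})
    (hGSpos : 0 < GS)
    (ν : (∀ j, X j) → Measure ℝ)
    (hν : ∀ x, ν x = volume.withDensity
      (fun z => ENNReal.ofReal ((ε / (2 * GS)) * Real.exp (-(ε * |z - q x|) / GS)))) :
    ∀ x x' : ∀ j, X j, Neighboring x x' → ∀ S : Set ℝ, MeasurableSet S →
      ν x S ≤ ENNReal.ofReal (Real.exp ε) * ν x' S := by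
  intro x x' hxx S hS
  have hbdd : BddAbove {d : ℝ | ∃ x x' : ∀ j, X j, Neighboring x x' ∧ d = |q x - q x'|} := by
    apply Set.Finite.bddAbove
    apply (Set.finite_range (fun p : (∀ j, X j) × (∀ j, X j) => |q p.1 - q p.2|)).subset
    rintro d ⟨a, b, _, rfl⟩
    exact ⟨(a, b), rfl⟩
  have hd : |q x - q x'| ≤ GS := by
    rw [hGS]
    exact le_csSup hbdd ⟨x, x', hxx, rfl⟩
  rw [hν x, hν x', withDensity_apply _ hS, withDensity_apply _ hS,
    ← lintegral_const_mul' _ _ ENNReal.ofReal_ne_top]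
  apply lintegral_mono
  intro z
  dsimp only
  rw [← ENNReal.ofReal_mul (Real.exp_pos ε).le]
  apply ENNReal.ofReal_le_ofReal
  rw [mul_left_comm, ← Real.exp_add]
  apply mul_le_mul_of_nonneg_left _ (by positivity)
  apply Real.exp_le_exp.mpr
  have h1 : |z - q x'| ≤ |z - q x| + |q x - q x'| := abs_sub_le _ _ _
  have h2 : ε + -(ε * |z - q x'|) / GS = (ε * (GS - |z - q x'|)) / GS := by
    field_simp
    ring
  rw [h2]
  apply div_le_div_of_nonneg_right _ hGSpos.le
  nlinarith
end

section
/- Let M : X → PMF(O) be a mechanism on a finite product input space X = Π_j X_j (each X_j containing an opt-out value ⊥) satisfying (ε,δ)-differential privacy, let C be a finite consequence space, f : O → C a post-processor, and u : C → ℝ a (bounded) utility function for agent j. Set r = (e^ε − 1 + δ·|C|)·(max_{c∈C} u(c) − min_{c∈C} u(c)). Then for every response a ∈ X_j with a ≠ ⊥ and every environment x₋ⱼ, Σ_{c∈C} u(c)·P(f(M(a, x₋ⱼ)) = c) + r ≥ Σ_{c∈C} u(c)·P(f(M(⊥, x₋ⱼ)) = c); i.e., compensating agent j by r suffices to induce participation.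 -/
open scoped ENNReal

/-- for an `(ε,δ)`-DP mechanism on a product space whose factors each
contain an opt-out value `bot j`, and a bounded utility function `u`, compensating agent
`j` by `r = (e^ε - 1 + δ|C|)(max u - min u)` suffices to induce participation: for every
non-opt-out response `a` and every environment, the expected utility of reporting `a`
plus `r` is at least the expected utility of opting out. -/
theorem stmt10 {n : ℕ} {X : Fin n → Type*} [∀ j, Fintype (X j)] {O : Type*}
    {C : Type*} [Fintype C] [Nonempty C]
    (bot : ∀ j, X j)
    (M : (∀ j, X j) → PMF O) (ε δ : ℝ) (hε : 0 ≤ ε) (hδ0 : 0 ≤ δ) (hδ1 : δ ≤ 1)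
    (hM : IsDP M ε δ) (f : O → C) (u : C → ℝ) (j : Fin n) (r : ℝ)
    (hr : r = (Real.exp ε - 1 + δ * (Fintype.card C : ℝ)) *
      (Finset.univ.sup' Finset.univ_nonempty u - Finset.univ.inf' Finset.univ_nonempty u)) :
    ∀ a : X j, a ≠ bot j → ∀ x : ∀ i, X i,
      (∑ c : C, u c * (((M (Function.update x j a)).map f) c).toReal) + r ≥
        ∑ c : C, u c * (((M (Function.update x j (bot j))).map f) c).toReal := by
  intro a ha x
  set P := (M (Function.update x j a)).map f with hP
  set Q := (M (Function.update x j (bot j))).map f with hQ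
  set m := Finset.univ.inf' Finset.univ_nonempty u
  set B := Finset.univ.sup' Finset.univ_nonempty u
  have hm : ∀ c, m ≤ u c := fun c => Finset.inf'_le _ (Finset.mem_univ c)
  have hB : ∀ c, u c ≤ B := fun c => Finset.le_sup' _ (Finset.mem_univ c)
  have hsum : ∀ p : PMF C, ∑ c, (p c).toReal = 1 := by
    intro p
    rw [← ENNReal.toReal_sum (fun c _ => p.apply_ne_top c), ← tsum_fintype (L := .unconditional C), p.tsum_coe]
    rfl
  have hmap : ∀ (p : PMF O) (c : C), (p.map f) c = p.toOuterMeasure (f ⁻¹' {c}) := by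
    intro p c
    rw [← PMF.toOuterMeasure_map_apply, PMF.toOuterMeasure_apply_singleton]
  have hN : Neighboring (Function.update x j (bot j)) (Function.update x j a) := by
    refine ⟨j, ?_, fun i hi => ?_⟩
    · simpa using ha.symm
    · simp [hi]
  have hdp : ∀ c, (Q c).toReal ≤ Real.exp ε * (P c).toReal + δ := by
    intro c
    have h := hM _ _ hN (f ⁻¹' {c})
    rw [← hmap, ← hmap, ← hP, ← hQ] at h
    have hfin : ENNReal.ofReal (Real.exp ε) * P c ≠ ⊤ :=
      ENNReal.mul_ne_top ENNReal.ofReal_ne_top (P.apply_ne_top c)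
    have h2 := ENNReal.toReal_mono (ENNReal.add_ne_top.2 ⟨hfin, ENNReal.ofReal_ne_top⟩) h
    rwa [ENNReal.toReal_add hfin ENNReal.ofReal_ne_top, ENNReal.toReal_mul,
      ENNReal.toReal_ofReal (Real.exp_pos ε).le, ENNReal.toReal_ofReal hδ0] at h2
  have he : 1 ≤ Real.exp ε := Real.one_le_exp hε
  have key : ∀ c ∈ Finset.univ, (u c - m) * ((Q c).toReal - (P c).toReal) ≤
      (B - m) * ((Real.exp ε - 1) * (P c).toReal + δ) := by
    intro c _
    have hp : 0 ≤ (P c).toReal := ENNReal.toReal_nonneg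
    have h0 : 0 ≤ (Real.exp ε - 1) * (P c).toReal + δ :=
      add_nonneg (mul_nonneg (by linarith) hp) hδ0
    calc (u c - m) * ((Q c).toReal - (P c).toReal)
        ≤ (u c - m) * ((Real.exp ε - 1) * (P c).toReal + δ) :=
          mul_le_mul_of_nonneg_left (by linarith [hdp c]) (by linarith [hm c])
      _ ≤ _ := mul_le_mul_of_nonneg_right (by linarith [hB c]) h0
  have hS := Finset.sum_le_sum key
  rw [← Finset.mul_sum, Finset.sum_add_distrib, ← Finset.mul_sum, hsum P] at hS
  simp only [sub_mul, mul_sub, Finset.sum_sub_distrib, ← Finset.mul_sum, hsum P, hsum Q,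
    Finset.sum_const, Finset.card_univ, nsmul_eq_mul] at hS
  rw [hr]
  nlinarith [hS]
end

section
/- Let X = Π_{j∈[n]} X_j with each X_j = {0,1} binary, let C = {g, n} be a binary consequence space, and let f_M : X → PMF(C) be a mechanism satisfying ε-differential privacy (finite ε ≥ 0). Suppose f_M is minimally responsive: for every agent j there exist a, b ∈ X_j and c ∈ C such that for all environments x₋ⱼ, P(f_M(a, x₋ⱼ) = c) ≠ P(f_M(b, x₋ⱼ) = c). Then for every input x ∈ X and every c ∈ C, 0 < P(f_M(x) = c) < 1; i.e., the mechanism never classifies any consequence with absolute certainty. -/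
open scoped ENNReal

/-- an `ε`-differentially private mechanism `fM` on binary response spaces
with a binary consequence space (`Bool`, `true` = grief `g`, `false` = no-grief `n`) that
is minimally responsive (for every agent `j` there are reports `a, b` and a consequence
`c` whose probability differs between `a` and `b` in every environment) never assigns
probability `0` or `1` to any consequence at any input. -/
theorem stmt13 {n : ℕ} (hn : 0 < n)
    (fM : (Fin n → Bool) → PMF Bool) (ε : ℝ) (hε : 0 ≤ ε)
    (hDP : IsDP (X := fun _ : Fin n => Bool) fM ε 0)
    (hResp : ∀ j : Fin n, ∃ (a b : Bool) (c : Bool), ∀ x : Fin n → Bool,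
      (fM (Function.update x j a)) c ≠ (fM (Function.update x j b)) c) :
    ∀ (x : Fin n → Bool) (c : Bool), 0 < (fM x) c ∧ (fM x) c < 1 := by
  have hsum : ∀ (z : Fin n → Bool) (c : Bool), fM z c + fM z (!c) = 1 := by
    intro z c
    have h := (fM z).tsum_coe
    rw [tsum_fintype, Fintype.sum_bool] at h
    cases c
    · rw [add_comm]; exact h
    · exact h
  have hpos : ∀ (x : Fin n → Bool) (c : Bool), fM x c ≠ 0 := by
    intro x c h0
    obtain ⟨a, b, d, h⟩ := hResp ⟨0, hn⟩
    have hz : ∀ v : Bool, fM (Function.update x ⟨0, hn⟩ v) c = 0 := by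
      intro v
      by_cases hv : v = x ⟨0, hn⟩
      · rw [hv, Function.update_eq_self]; exact h0
      · have := hDP (Function.update x ⟨0, hn⟩ v) x
          ⟨⟨0, hn⟩, by simpa using hv, fun i hi => Function.update_of_ne hi _ _⟩ {c}
        rw [PMF.toOuterMeasure_apply_singleton, PMF.toOuterMeasure_apply_singleton, h0] at this
        simpa using this
    have hone : ∀ v : Bool, fM (Function.update x ⟨0, hn⟩ v) (!c) = 1 := by
      intro v
      have := hsum (Function.update x ⟨0, hn⟩ v) c
      rwa [hz v, zero_add] at this
    apply h x
    by_cases hd : d = c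
    · rw [hd, hz, hz]
    · have hd' : d = !c := by cases c <;> cases d <;> simp_all
      rw [hd', hone, hone]
  intro x c
  refine ⟨pos_iff_ne_zero.mpr (hpos x c), ?_⟩
  refine lt_of_le_of_ne ((fM x).coe_le_one c) ?_
  intro h1
  have h := hsum x c
  rw [h1] at h
  apply hpos x (!c)
  have h2 : (1 : ℝ≥0∞) + fM x (!c) = 1 + 0 := by rw [h, add_zero]
  exact (ENNReal.add_right_inj ENNReal.one_ne_top).mp h2
end
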